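/- For all integers M, N ≥ 0, the rational function P(M,N) is in fact a polynomial in q with nonnegative integer coefficients. -/

import Mathlib

open scoped BigOperators

noncomputable section

/-- The field ℚ(q). -/
abbrev K : Type := RatFunc ℚ

/-- The variable q. -/
def qq : K := RatFunc.X

/-- The quantum integer [n] = 1 + q + ⋯ + q^{n-1}. -/
def qint (n : ℕ) : K := ∑ i ∈ Finset.range n, qq ^ i

/-- The quantum factorial [n]! = [1][2]⋯[n]. -/
def qfact (n : ℕ) : K := ∏ i ∈ Finset.range n, qint (i + 1)

/-- The Gaussian binomial coefficient [n choose k] = [n]!/([k]!·[n-k]!),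
with the convention that it is 0 when k > n. -/
def qbinom (n k : ℕ) : K :=
  if k ≤ n then qfact n / (qfact k * qfact (n - k)) else 0

/-- a_{(2m-1,N)} = [N+2m]/[2m] and a_{(2m,N)} = [2N+2m]/[N+2m]:
for odd j = 2m-1 this is [N+j+1]/[j+1], for even j = 2m this is [2N+j]/[N+j]. -/
def aB (j N : ℕ) : K :=
  if Odd j then qint (N + j + 1) / qint (j + 1) else qint (2 * N + j) / qint (N + j)

/-- P(M,N) = ∏_{i=1}^{N}(1+q^i) · ∏_{j=1}^{M} a_{(j,N)}. -/
def P (M N : ℕ) : K :=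
  (∏ i ∈ Finset.range N, (1 + qq ^ (i + 1))) * ∏ j ∈ Finset.range M, aB (j + 1) N

def Good (x : K) : Prop :=
  ∃ p : Polynomial ℕ, x = algebraMap (Polynomial ℚ) K (p.map (Nat.castRingHom ℚ))

lemma Good.add {x y : K} : Good x → Good y → Good (x + y) := by
  rintro ⟨p, rfl⟩ ⟨r, rfl⟩
  exact ⟨p + r, by simp⟩

lemma Good.mul {x y : K} : Good x → Good y → Good (x * y) := by
  rintro ⟨p, rfl⟩ ⟨r, rfl⟩
  exact ⟨p * r, by simp⟩

lemma good_one : Good 1 := ⟨1, by simp⟩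

lemma good_qpow (n : ℕ) : Good (qq ^ n) := ⟨Polynomial.X ^ n, by simp [qq]⟩

lemma good_F (N : ℕ) : Good (∏ i ∈ Finset.range N, (1 + qq ^ (i + 1))) := by
  induction N with
  | zero => simpa using good_one
  | succ n ih =>
    rw [Finset.prod_range_succ]
    exact ih.mul (good_one.add (good_qpow _))

lemma qint_add (a b : ℕ) : qint (a + b) = qint a + qq ^ a * qint b := by
  simp only [qint, Finset.sum_range_add, Finset.mul_sum, pow_add]

lemma ne_of_coeff (p : Polynomial ℚ) (h : p.coeff 0 = 1) : algebraMap (Polynomial ℚ) K p ≠ 0 := by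
  intro h0
  have : p = 0 := (map_eq_zero_iff _ (IsFractionRing.injective (Polynomial ℚ) K)).1 h0
  simp [this] at h

lemma qint_ne (n : ℕ) : qint (n + 1) ≠ 0 := by
  have := ne_of_coeff (∑ i ∈ Finset.range (n + 1), Polynomial.X ^ i) (by
    simp [Polynomial.coeff_X_pow])
  simpa [qint, qq] using this

lemma one_add_ne (n : ℕ) : (1 + qq ^ (n + 1) : K) ≠ 0 := by
  have := ne_of_coeff (1 + Polynomial.X ^ (n + 1)) (by simp)
  simpa [qq] using this

lemma P_odd (k N : ℕ) : P (2 * k + 1) N = P (2 * k) N * (qint (N + (2 * k + 2)) / qint (2 * k + 2)) := by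
  have h : Odd (2 * k + 1) := ⟨k, rfl⟩
  simp only [P, Finset.prod_range_succ _ (2 * k), aB, if_pos h, ← mul_assoc]
  rfl

lemma P_even (k N : ℕ) :
    P (2 * k + 2) N = P (2 * k) N * (qint (2 * N + (2 * k + 2)) / qint (2 * k + 2)) := by
  have h : ¬ Odd (2 * k + 1 + 1) := by
    rw [Nat.not_odd_iff_even]; exact ⟨k + 1, by ring⟩
  have h1 : P (2 * k + 2) N = P (2 * k + 1) N * aB (2 * k + 1 + 1) N := by
    simp only [P, Finset.prod_range_succ _ (2 * k + 1), ← mul_assoc]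
  have e : qint (N + (2 * k + 2)) ≠ 0 := qint_ne (N + (2 * k + 1))
  have e' := qint_ne (2 * k + 1)
  rw [h1, P_odd, aB, if_neg h]
  simp only [add_assoc, Nat.reduceAdd] at *
  field_simp

lemma qint_double (N : ℕ) : qint (2 * N) = (1 + qq ^ N) * qint N := by
  rw [two_mul, qint_add]; ring

lemma P_rel (k N : ℕ) :
    P (2 * k + 2) N * (1 + qq ^ (N + 1)) * qint (2 * k + 2)
      = P (2 * k) (N + 1) * qint (2 * (N + 1)) := by
  induction k with
  | zero =>
    have e' := qint_ne 1
    rw [P_even]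
    simp only [P, Finset.prod_range_succ _ N, mul_zero, Finset.prod_range_zero, zero_add, mul_add,
      mul_one, Nat.reduceAdd] at *
    field_simp
  | succ k ih =>
    have e1 := qint_ne (2 * k + 1)
    have e2 := qint_ne (2 * k + 3)
    have h1 := P_even (k + 1) N
    have h2 := P_even k (N + 1)
    have a1 : 2 * N + (2 * (k + 1) + 2) = 2 * N + 2 * k + 4 := by ring
    have a2 : 2 * (N + 1) + (2 * k + 2) = 2 * N + 2 * k + 4 := by ring
    have a3 : 2 * (k + 1) = 2 * k + 2 := by ring
    rw [a1] at h1
    rw [a2] at h2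
    rw [h1, a3, h2]
    simp only [add_assoc, Nat.reduceAdd] at *
    field_simp
    linear_combination qint (2 * N + (2 * k + 4)) * ih

lemma P_even_rec (k N : ℕ) : P (2 * k + 2) (N + 1)
    = P (2 * k) (N + 1) + qq ^ (2 * k + 2) * (1 + qq ^ (N + 1)) * P (2 * k + 2) N := by
  have e1 : qint (2 * k + 2) ≠ 0 := qint_ne (2 * k + 1)
  rw [P_even, add_comm (2 * (N + 1)), qint_add]
  have := P_rel k N
  field_simp
  linear_combination (-qq ^ (2 * k + 2)) * this

lemma P_odd_rec (k N : ℕ) : P (2 * k + 1) (N + 1)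
    = P (2 * k) (N + 1) + qq ^ (2 * k + 2) * P (2 * k + 2) N := by
  have e1 : qint (2 * k + 2) ≠ 0 := qint_ne (2 * k + 1)
  have e2 := one_add_ne N
  rw [P_odd, add_comm (N + 1), qint_add]
  have := P_rel k N
  rw [qint_double] at this
  have h : P (2 * k + 2) N * qint (2 * k + 2) = P (2 * k) (N + 1) * qint (N + 1) := by
    apply mul_left_cancel₀ e2
    linear_combination this
  field_simp
  linear_combination (-qq ^ (2 * k + 2)) * h

lemma P_zero (M : ℕ) : P M 0 = 1 := by
  simp only [P, Finset.prod_range_zero, one_mul]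
  apply Finset.prod_eq_one
  intro j _
  simp only [aB, zero_add, mul_zero]
  split_ifs
  · exact div_self (qint_ne _)
  · exact div_self (qint_ne _)

lemma good_even (N k : ℕ) : Good (P (2 * k) N) := by
  induction N generalizing k with
  | zero => rw [P_zero]; exact good_one
  | succ N ihN =>
    induction k with
    | zero => simpa [P] using good_F (N + 1)
    | succ k ih =>
      have := ihN (k + 1)
      rw [mul_add, mul_one] at *
      rw [P_even_rec]
      exact ih.add (((good_qpow _).mul (good_one.add (good_qpow _))).mul this)

theorem stmt_6 (M N : ℕ) :
    ∃ p : Polynomial ℕ,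
      P M N = algebraMap (Polynomial ℚ) K (p.map (Nat.castRingHom ℚ)) := by
  change Good (P M N)
  rcases Nat.even_or_odd' M with ⟨k, rfl | rfl⟩
  · exact good_even N k
  · cases N with
    | zero => rw [P_zero]; exact good_one
    | succ N =>
      rw [P_odd_rec]
      exact (good_even _ _).add ((good_qpow _).mul (good_even N (k + 1)))
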